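/- Let (C_•, d_•) be a normed chain complex of real normed vector spaces with norms ‖·‖_C, and let (D^•, d^•) be its dual normed chain complex, where D^n is the topological dual of C_n with the dual norm ‖·‖_D and d^{n−1} is the adjoint of d_n. Then for every homology class α ∈ H_n(C_•), the seminorm of α satisfies ‖α‖_C = max { ⟨β,α⟩ : β ∈ H_b^n(D^•), ‖β‖_D ≤ 1 }, where ⟨·,·⟩ is the Kronecker product induced by the duality pairing and the maximum is attained. -/

import Mathlib

noncomputable section

namespace NormedChainDuality

variable (C : ℕ → Type) [∀ n, NormedAddCommGroup (C n)] [∀ n, NormedSpace ℝ (C n)]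
variable (d : ∀ n : ℕ, C (n + 1) →L[ℝ] C n)

/-- The topological dual of the degree-`n` part, with the operator (dual) norm. -/
abbrev D (n : ℕ) : Type := C n →L[ℝ] ℝ

/-- The dual differential `dⁿ : Dⁿ → Dⁿ⁺¹`, the adjoint of `d_{n+1}`. -/
def dualD (n : ℕ) : D C n →ₗ[ℝ] D C (n + 1) where
  toFun b := b.comp (d n)
  map_add' b b' := by ext x; simp
  map_smul' r b := by ext x; simp

/-- Cycles of the normed chain complex (in degree 0, every chain is a cycle). -/
def cyc : ∀ n : ℕ, Submodule ℝ (C n)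
  | 0 => ⊤
  | (m + 1) => LinearMap.ker (d m : C (m + 1) →ₗ[ℝ] C m)

/-- The homology of the normed chain complex. -/
def Hom (n : ℕ) := cyc C d n ⧸ ((LinearMap.range (d n : C (n + 1) →ₗ[ℝ] C n)).comap (cyc C d n).subtype)

instance (n : ℕ) : AddCommGroup (Hom C d n) := Submodule.Quotient.addCommGroup _
instance (n : ℕ) : Module ℝ (Hom C d n) := Submodule.Quotient.module _

/-- The homology class of a cycle. -/
def homClass {n : ℕ} (c : cyc C d n) : Hom C d n := Submodule.Quotient.mk c

/-- The quotient seminorm on homology. -/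
def homNorm {n : ℕ} (α : Hom C d n) : ℝ :=
  sInf {r : ℝ | ∃ c : cyc C d n, homClass C d c = α ∧ r = ‖(c : C n)‖}

/-- Cocycles of the dual normed chain complex. -/
def coc (n : ℕ) : Submodule ℝ (D C n) := LinearMap.ker (dualD C d n)

/-- Coboundaries of the dual normed chain complex. -/
def cob : ∀ n : ℕ, Submodule ℝ (D C n)
  | 0 => ⊥
  | (m + 1) => LinearMap.range (dualD C d m)

set_option maxSynthPendingDepth 3

/-- The (bounded) cohomology of the dual normed chain complex. -/
def Coh (n : ℕ) := coc C d n ⧸ ((cob C d n).comap (coc C d n).subtype)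

instance (n : ℕ) : AddCommGroup (Coh C d n) := Submodule.Quotient.addCommGroup _
instance (n : ℕ) : Module ℝ (Coh C d n) := Submodule.Quotient.module _

/-- The cohomology class of a cocycle. -/
def cohClass {n : ℕ} (b : coc C d n) : Coh C d n := Submodule.Quotient.mk b

/-- The quotient seminorm (of the dual norm) on the cohomology of the dual complex. -/
def cohNorm {n : ℕ} (β : Coh C d n) : ℝ :=
  sInf {r : ℝ | ∃ b : coc C d n, cohClass C d b = β ∧ r = ‖(b : D C n)‖}

/-- The Kronecker product `⟨·,·⟩ : H_b^n(D) × H_n(C) → ℝ`, induced by the duality pairing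
(evaluation of cochains on chains); it is well defined on (co)homology classes since
cocycles vanish on boundaries and coboundaries vanish on cycles, so its value may be
computed on arbitrary representatives. -/
def kron {n : ℕ} (β : Coh C d n) (α : Hom C d n) : ℝ :=
  ((Quotient.out β : coc C d n) : D C n) ((Quotient.out α : cyc C d n) : C n)

/-!
By Hahn–Banach on the seminormed quotient of `C n` by the boundaries, the distance from a cycle `c`
to the boundaries is `f c` for some functional `f` of norm at most one that kills the boundaries,
i.e. for some cocycle. Since boundaries are cycles, that distance is the seminorm of the class of
`c`, so the class of `f` attains the maximum; the upper bound is the operator-norm inequality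
`|b c| ≤ ‖b‖ ‖c‖`, with the infimum taken over the representatives of both classes.
-/

section General

theorem exists_dual_vector_eq_infDist {𝕜 E : Type*} [RCLike 𝕜] [SeminormedAddCommGroup E]
    [NormedSpace 𝕜 E] (S : Submodule 𝕜 E) (x : E) :
    ∃ f : StrongDual 𝕜 E, ‖f‖ ≤ 1 ∧ (∀ y ∈ S, f y = 0) ∧ f x = (Metric.infDist x S : ℝ) := by
  obtain ⟨g, hg_norm, hgx⟩ := exists_dual_vector'' 𝕜 (S.mkQ x)
  refine ⟨g.comp S.mkQL, ?_, fun y hy => ?_, ?_⟩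
  · refine ContinuousLinearMap.opNorm_le_bound _ zero_le_one fun y => ?_
    exact (g.le_of_opNorm_le hg_norm _).trans
      (mul_le_mul_of_nonneg_left (Submodule.Quotient.norm_mk_le S y) zero_le_one)
  · have hy_mk : S.mkQ y = 0 := (Submodule.Quotient.mk_eq_zero S).2 hy
    simp [hy_mk]
  · have norm_mk : ‖S.mkQ x‖ = Metric.infDist x S :=
      QuotientAddGroup.norm_mk (S := S.toAddSubgroup) x
    rw [← norm_mk, ← hgx, ContinuousLinearMap.comp_apply, Submodule.mkQL_apply]

theorem le_csInf_mul_csInf {R : Type*} [ConditionallyCompleteLinearOrder R] [TopologicalSpace R]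
    [OrderTopology R] [Mul R] [ContinuousMul R] {s t : Set R} {a : R}
    (hs : s.Nonempty) (hs_bdd : BddBelow s) (ht : t.Nonempty) (ht_bdd : BddBelow t)
    (h : ∀ x ∈ s, ∀ y ∈ t, a ≤ x * y) : a ≤ sInf s * sInf t :=
  isClosed_Ici.closure_subset <| map_mem_closure₂ continuous_mul
    (csInf_mem_closure hs hs_bdd) (csInf_mem_closure ht ht_bdd) h

end General

section Duality

variable {C d} {n : ℕ}

theorem range_le_cyc (hdd : ∀ (n : ℕ) (x : C (n + 2)), d n (d (n + 1) x) = 0) (n : ℕ) :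
    LinearMap.range (d n : C (n + 1) →ₗ[ℝ] C n) ≤ cyc C d n := by
  rintro _ ⟨x, rfl⟩
  cases n with
  | zero => exact Submodule.mem_top
  | succ m => exact hdd m x

theorem mem_coc {b : D C n} : b ∈ coc C d n ↔ ∀ x, b (d n x) = 0 :=
  ContinuousLinearMap.ext_iff

theorem apply_eq_zero_of_mem_cob_of_mem_cyc {b : D C n} {c : C n}
    (hb : b ∈ cob C d n) (hc : c ∈ cyc C d n) : b c = 0 := by
  cases n with
  | zero => rw [(Submodule.mem_bot ℝ).1 hb, zero_apply]
  | succ m =>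
    obtain ⟨a, rfl⟩ := hb
    have hdc : d m c = 0 := hc
    exact (congrArg a hdc).trans (map_zero a)

theorem homClass_surjective : Function.Surjective (homClass C d (n := n)) :=
  Submodule.Quotient.mk_surjective _

theorem cohClass_surjective : Function.Surjective (cohClass C d (n := n)) :=
  Submodule.Quotient.mk_surjective _

theorem homClass_eq_homClass_iff {c c' : cyc C d n} :
    homClass C d c = homClass C d c' ↔
      (c - c' : C n) ∈ LinearMap.range (d n : C (n + 1) →ₗ[ℝ] C n) :=
  Submodule.Quotient.eq _

theorem cohClass_eq_cohClass_iff {b b' : coc C d n} :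
    cohClass C d b = cohClass C d b' ↔ (b - b' : D C n) ∈ cob C d n :=
  Submodule.Quotient.eq _

theorem apply_eq_of_cohClass_eq_of_homClass_eq {b b' : coc C d n} {c c' : cyc C d n}
    (hb : cohClass C d b = cohClass C d b') (hc : homClass C d c = homClass C d c') :
    (b : D C n) c = (b' : D C n) c' := by
  obtain ⟨x, hx⟩ := homClass_eq_homClass_iff.1 hc
  have apply_boundary : (b' : D C n) (c - c') = 0 := hx ▸ mem_coc.1 b'.2 x
  have coboundary_apply : (b - b' : D C n) c = 0 :=
    apply_eq_zero_of_mem_cob_of_mem_cyc (cohClass_eq_cohClass_iff.1 hb) c.2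
  calc (b : D C n) c = (b' : D C n) c := sub_eq_zero.1 coboundary_apply
    _ = (b' : D C n) c' := sub_eq_zero.1 (by rwa [map_sub] at apply_boundary)

theorem kron_cohClass_homClass (b : coc C d n) (c : cyc C d n) :
    kron C d (cohClass C d b) (homClass C d c) = (b : D C n) c :=
  apply_eq_of_cohClass_eq_of_homClass_eq (Quotient.out_eq _) (Quotient.out_eq _)

theorem bddBelow_norm_homClass_eq (α : Hom C d n) :
    BddBelow {r : ℝ | ∃ c : cyc C d n, homClass C d c = α ∧ r = ‖(c : C n)‖} :=
  ⟨0, by rintro _ ⟨c, -, rfl⟩; exact norm_nonneg _⟩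

theorem bddBelow_norm_cohClass_eq (β : Coh C d n) :
    BddBelow {r : ℝ | ∃ b : coc C d n, cohClass C d b = β ∧ r = ‖(b : D C n)‖} :=
  ⟨0, by rintro _ ⟨b, -, rfl⟩; exact norm_nonneg _⟩

theorem nonempty_norm_homClass_eq (α : Hom C d n) :
    {r : ℝ | ∃ c : cyc C d n, homClass C d c = α ∧ r = ‖(c : C n)‖}.Nonempty :=
  let ⟨c, hc⟩ := homClass_surjective α
  ⟨_, c, hc, rfl⟩

theorem nonempty_norm_cohClass_eq (β : Coh C d n) :
    {r : ℝ | ∃ b : coc C d n, cohClass C d b = β ∧ r = ‖(b : D C n)‖}.Nonempty :=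
  let ⟨b, hb⟩ := cohClass_surjective β
  ⟨_, b, hb, rfl⟩

theorem homNorm_nonneg (α : Hom C d n) : 0 ≤ homNorm C d α :=
  Real.sInf_nonneg (by rintro _ ⟨c, -, rfl⟩; exact norm_nonneg _)

theorem homNorm_homClass_le (c : cyc C d n) : homNorm C d (homClass C d c) ≤ ‖(c : C n)‖ :=
  csInf_le (bddBelow_norm_homClass_eq _) ⟨c, rfl, rfl⟩

theorem cohNorm_cohClass_le (b : coc C d n) : cohNorm C d (cohClass C d b) ≤ ‖(b : D C n)‖ :=
  csInf_le (bddBelow_norm_cohClass_eq _) ⟨b, rfl, rfl⟩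

theorem homNorm_homClass_eq_infDist
    (hd : LinearMap.range (d n : C (n + 1) →ₗ[ℝ] C n) ≤ cyc C d n) (c : cyc C d n) :
    homNorm C d (homClass C d c) =
      Metric.infDist (c : C n) (LinearMap.range (d n : C (n + 1) →ₗ[ℝ] C n)) := by
  refine le_antisymm ((Metric.le_infDist ⟨0, zero_mem _⟩).2 fun {y} hy => ?_)
    (le_csInf (nonempty_norm_homClass_eq _) ?_)
  · let c' : cyc C d n := c - ⟨y, hd hy⟩
    have class_eq : homClass C d c = homClass C d c' :=
      homClass_eq_homClass_iff.2 (by simpa [c'] using hy)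
    calc homNorm C d (homClass C d c) ≤ ‖(c' : C n)‖ := class_eq ▸ homNorm_homClass_le c'
      _ = dist (c : C n) y := (dist_eq_norm _ _).symm
  · rintro _ ⟨c', hc', rfl⟩
    calc Metric.infDist (c : C n) (LinearMap.range (d n : C (n + 1) →ₗ[ℝ] C n))
        ≤ dist (c : C n) (c - c') :=
          Metric.infDist_le_dist_of_mem (homClass_eq_homClass_iff.1 hc'.symm)
      _ = ‖(c' : C n)‖ := by rw [dist_eq_norm, sub_sub_cancel]

theorem abs_kron_le (β : Coh C d n) (α : Hom C d n) :
    |kron C d β α| ≤ cohNorm C d β * homNorm C d α := by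
  refine le_csInf_mul_csInf (nonempty_norm_cohClass_eq β) (bddBelow_norm_cohClass_eq β)
    (nonempty_norm_homClass_eq α) (bddBelow_norm_homClass_eq α) ?_
  rintro _ ⟨b, rfl, rfl⟩ _ ⟨c, rfl, rfl⟩
  rw [kron_cohClass_homClass]
  exact (b : D C n).le_opNorm c

theorem kron_le_homNorm {β : Coh C d n} (hβ : cohNorm C d β ≤ 1) (α : Hom C d n) :
    kron C d β α ≤ homNorm C d α :=
  calc kron C d β α ≤ cohNorm C d β * homNorm C d α := (le_abs_self _).trans (abs_kron_le β α)
    _ ≤ homNorm C d α := mul_le_of_le_one_left (homNorm_nonneg α) hβ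

theorem exists_coc_apply_eq_infDist (x : C n) :
    ∃ b : coc C d n, ‖(b : D C n)‖ ≤ 1 ∧
      (b : D C n) x = Metric.infDist x (LinearMap.range (d n : C (n + 1) →ₗ[ℝ] C n)) :=
  let ⟨f, hf_norm, hf_range, hfx⟩ := exists_dual_vector_eq_infDist
    (LinearMap.range (d n : C (n + 1) →ₗ[ℝ] C n)) x
  ⟨⟨f, mem_coc.2 fun y => hf_range _ ⟨y, rfl⟩⟩, hf_norm, hfx⟩

end Duality

/-- **Duality principle for seminorms on normed chain complexes.**
Let `(C_•, d_•)` be a normed chain complex of real normed vector spaces with dual normed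
chain complex `(D^•, d^•)`. Then for every homology class `α ∈ H_n(C_•)`, the quotient
seminorm of `α` satisfies `‖α‖_C = max {⟨β, α⟩ : β ∈ H_b^n(D^•), ‖β‖_D ≤ 1}`; in
particular the maximum is attained. -/
theorem homNorm_eq_max_kron
    (hdd : ∀ (n : ℕ) (x : C (n + 2)), d n (d (n + 1) x) = 0)
    (n : ℕ) (α : Hom C d n) :
    ∃ β : Coh C d n, cohNorm C d β ≤ 1 ∧ kron C d β α = homNorm C d α ∧
      ∀ β' : Coh C d n, cohNorm C d β' ≤ 1 → kron C d β' α ≤ homNorm C d α := by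
  obtain ⟨c, rfl⟩ := homClass_surjective α
  obtain ⟨b, hb_norm, hbc⟩ := exists_coc_apply_eq_infDist (d := d) (c : C n)
  refine ⟨cohClass C d b, (cohNorm_cohClass_le b).trans hb_norm, ?_,
    fun β' hβ' => kron_le_homNorm hβ' _⟩
  rw [kron_cohClass_homClass, hbc, homNorm_homClass_eq_infDist (range_le_cyc hdd n)]

end NormedChainDuality
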